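/- arXiv:1505.01379 — 2 statements merged into one kernel-verified Lean document; each statement's English description precedes it below -/
import Mathlib

section
/- Let 𝔽_q be a finite field of characteristic p and let u : ℕ → 𝔽_q be a sequence. The formal power series f = Σ_{n≥0} u_n Xⁿ ∈ 𝔽_q[[X]] is algebraic over the rational function field 𝔽_q(X) (i.e., some nonzero polynomial in Y with coefficients in 𝔽_q[X] vanishes at f) if and only if the p-kernel of u, namely the set of sequences { n ↦ u(n·p^k + r) : k ∈ ℕ, 0 ≤ r < p^k }, is finite. -/
/-!
Write `q` for the cardinality of `F`. The kernel for the base `p` is finite if and only if the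
kernel for the base `q` is, so it suffices to work with `q`, for which `g ↦ g ^ q` is
`X ↦ X ^ q`. The Cartier operators `Λ_r (∑ aₙ Xⁿ) = ∑ a_{nq+r} Xⁿ` then satisfy
`Λ_r (g ^ q * h) = g * Λ_r h` and `g = ∑_{r < q} X ^ r * (Λ_r g) ^ q`.

If the kernel is finite, with `d` elements, the second identity puts it inside the `F[X]`-span of
the `q`-th powers of its elements. Iterating, all the powers `f ^ q ^ i` with `i ≤ d` lie in the
span of the `d` elements `g ^ q ^ d`, `g` in the kernel, so they are linearly dependent.

Conversely, `Λ_r` turns a linear relation between `q`-th powers into one between the elements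
themselves. Since the powers `f ^ q ^ i` of an algebraic `f` are linearly dependent, it follows that
some `a • f` with `a ≠ 0` is a combination of the `f ^ q ^ (i + 1)`. The series `h` for which
`a ^ q • h` is such a combination with coefficients of degree at most `q * N` are finite in number
and, for `N` large, stable under the Cartier operators.
-/

open Polynomial Submodule
open scoped PowerSeries

namespace Christol

section Kernel

variable {A : Type*}

/-- The subsequence of `u` along the arithmetic progression `q * ℕ + r`. -/
def decimate (q r : ℕ) (u : ℕ → A) : ℕ → A := fun n => u (n * q + r)

/-- The `q`-kernel of a sequence, for an arbitrary base `q`. -/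
def kernel (q : ℕ) (u : ℕ → A) : Set (ℕ → A) :=
  {v | ∃ k r : ℕ, r < q ^ k ∧ v = decimate (q ^ k) r u}

lemma decimate_decimate (a b r s : ℕ) (u : ℕ → A) :
    decimate a r (decimate b s u) = decimate (a * b) (r * b + s) u := by
  funext n
  simp only [decimate]
  congr 1
  ring

lemma decimate_one_zero (u : ℕ → A) : decimate 1 0 u = u := by
  funext n
  simp only [decimate, mul_one, add_zero]

lemma decimate_mul (a : ℕ) {b r : ℕ} (u : ℕ → A) :
    decimate (a * b) r u = decimate a (r / b) (decimate b (r % b) u) := by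
  rw [decimate_decimate, Nat.div_add_mod']

lemma self_mem_kernel (q : ℕ) (u : ℕ → A) : u ∈ kernel q u :=
  ⟨0, 0, by simp, by rw [pow_zero, decimate_one_zero]⟩

lemma decimate_mem_kernel {q r : ℕ} {u v : ℕ → A} (hv : v ∈ kernel q u) (hr : r < q) :
    decimate q r v ∈ kernel q u := by
  obtain ⟨k, s, hs, rfl⟩ := hv
  refine ⟨k + 1, r * q ^ k + s, ?_, by rw [decimate_decimate, pow_succ']⟩
  calc r * q ^ k + s < r * q ^ k + q ^ k := by gcongr
    _ = (r + 1) * q ^ k := by ring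
    _ ≤ q * q ^ k := by gcongr; exact hr
    _ = q ^ (k + 1) := (pow_succ' q k).symm

lemma kernel_subset_of_decimate_mem {q : ℕ} {u : ℕ → A} {S : Set (ℕ → A)} (hu : u ∈ S)
    (hS : ∀ v ∈ S, ∀ r < q, decimate q r v ∈ S) : kernel q u ⊆ S := by
  rintro _ ⟨k, r, hr, rfl⟩
  induction k generalizing r with
  | zero =>
    obtain rfl : r = 0 := by simpa using hr
    rwa [pow_zero, decimate_one_zero]
  | succ k ih =>
    have hpos : 0 < q ^ k := Nat.pos_of_ne_zero fun h => by simp [pow_succ, h] at hr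
    rw [pow_succ', decimate_mul]
    refine hS _ (ih _ (Nat.mod_lt _ hpos)) _ ?_
    rwa [Nat.div_lt_iff_lt_mul hpos, ← pow_succ']

lemma finite_kernel_pow_iff {q s : ℕ} (hq : 0 < q) (hs : 0 < s) (u : ℕ → A) :
    (kernel (q ^ s) u).Finite ↔ (kernel q u).Finite := by
  constructor
  · intro h
    have hfin := (h.prod ((Set.finite_Iio s).prod (Set.finite_Iio (q ^ s)))).image
      fun x => decimate (q ^ x.2.1) x.2.2 x.1
    refine hfin.subset ?_
    rintro _ ⟨k, r, hr, rfl⟩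
    have hk : q ^ k = q ^ (k % s) * (q ^ s) ^ (k / s) := by
      rw [← pow_mul, ← pow_add, Nat.mod_add_div]
    have hpos : 0 < (q ^ s) ^ (k / s) := by positivity
    have hr' : r / (q ^ s) ^ (k / s) < q ^ (k % s) := by rwa [Nat.div_lt_iff_lt_mul hpos, ← hk]
    have hks : k % s < s := Nat.mod_lt _ hs
    refine ⟨(_, k % s, r / (q ^ s) ^ (k / s)), ⟨⟨k / s, _, Nat.mod_lt r hpos, rfl⟩, hks, ?_⟩, ?_⟩
    · exact hr'.trans_le (Nat.pow_le_pow_right hq hks.le)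
    · rw [hk, decimate_mul]
      rfl
  · refine fun h => h.subset ?_
    rintro _ ⟨k, r, hr, rfl⟩
    rw [← pow_mul] at hr ⊢
    exact ⟨s * k, r, hr, rfl⟩

end Kernel

section Cartier

variable {R : Type*} [CommSemiring R]

/-- The Cartier operator `Λ_r`, taking `∑ aₙ Xⁿ` to `∑ a_{nq+r} Xⁿ`; it acts on power series as
`decimate` does on their coefficients. -/
noncomputable def cartier (q r : ℕ) : R⟦X⟧ →ₗ[R] R⟦X⟧ where
  toFun f := PowerSeries.mk (decimate q r fun n => PowerSeries.coeff n f)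
  map_add' f g := by ext; simp [decimate]
  map_smul' a f := by ext; simp [decimate]

lemma cartier_mk (q r : ℕ) (u : ℕ → R) :
    cartier q r (PowerSeries.mk u) = PowerSeries.mk (decimate q r u) := by
  simp [cartier]

@[simp]
lemma coeff_cartier (q r n : ℕ) (f : R⟦X⟧) :
    PowerSeries.coeff n (cartier q r f) = PowerSeries.coeff (n * q + r) f := by
  simp [cartier, decimate]

lemma ext_cartier {q : ℕ} (hq : q ≠ 0) {f g : R⟦X⟧}
    (h : ∀ r < q, cartier q r f = cartier q r g) : f = g := by
  ext n
  have hn := congrArg (PowerSeries.coeff (n / q)) (h (n % q) (Nat.mod_lt n hq.bot_lt))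
  rwa [coeff_cartier, coeff_cartier, Nat.div_add_mod'] at hn

/-- The Cartier operator on polynomials, keeping the coefficients of index `nq + r`. It has this
meaning for `q ≠ 0` only. -/
noncomputable def polyCartier (q r : ℕ) (c : R[X]) : R[X] := contract q (divX^[r] c)

lemma coeff_iterate_divX (r n : ℕ) (c : R[X]) : (divX^[r] c).coeff n = c.coeff (n + r) := by
  induction r generalizing c with
  | zero => rfl
  | succ r ih => rw [Function.iterate_succ_apply, ih, coeff_divX, add_assoc]

lemma coeff_polyCartier {q : ℕ} (hq : q ≠ 0) (r n : ℕ) (c : R[X]) :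
    (polyCartier q r c).coeff n = c.coeff (n * q + r) := by
  rw [polyCartier, coeff_contract hq, coeff_iterate_divX]

lemma coe_polyCartier {q : ℕ} (hq : q ≠ 0) (r : ℕ) (c : R[X]) :
    (polyCartier q r c : R⟦X⟧) = cartier q r c := by
  ext n
  rw [coeff_coe, coeff_polyCartier hq, coeff_cartier, coeff_coe]

lemma natDegree_polyCartier_le {q N : ℕ} (hq : q ≠ 0) (r : ℕ) {c : R[X]}
    (hc : c.natDegree ≤ q * N) : (polyCartier q r c).natDegree ≤ N := by
  rw [natDegree_le_iff_coeff_eq_zero] at hc ⊢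
  intro n hn
  rw [coeff_polyCartier hq]
  refine hc _ (lt_of_lt_of_le ?_ (Nat.le_add_right _ r))
  rw [mul_comm n q]
  exact Nat.mul_lt_mul_of_pos_left hn hq.bot_lt

lemma eq_zero_of_polyCartier_eq_zero {q : ℕ} (hq : q ≠ 0) {c : R[X]}
    (h : ∀ r < q, polyCartier q r c = 0) : c = 0 := by
  rw [← Polynomial.coe_eq_zero_iff]
  refine ext_cartier hq fun r hr => ?_
  rw [← coe_polyCartier hq, h r hr, Polynomial.coe_zero, map_zero]

end Cartier

section Expand

variable {R : Type*} [CommRing R]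

lemma cartier_X_pow_mul_expand {q r s : ℕ} (hq : q ≠ 0) (hr : r < q) (hs : s < q) (g : R⟦X⟧) :
    cartier q r (PowerSeries.X ^ s * PowerSeries.expand q hq g) = if r = s then g else 0 := by
  ext n
  rw [coeff_cartier, PowerSeries.coeff_X_pow_mul']
  split_ifs with hle hrs hrs
  · rw [hrs, Nat.add_sub_cancel, mul_comm, PowerSeries.coeff_expand_mul]
  · have hndvd : ¬ q ∣ n * q + r - s := by
      intro hdvd
      have hmod : n * q + r ≡ s [MOD q] := ((Nat.modEq_iff_dvd' hle).2 hdvd).symm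
      exact hrs (Nat.ModEq.eq_of_lt_of_lt (by simpa [Nat.ModEq] using hmod) hr hs)
    rw [PowerSeries.coeff_expand_of_not_dvd q hq g hndvd, map_zero]
  · omega
  · rw [map_zero]

lemma sum_X_pow_mul_expand_cartier {q : ℕ} (hq : q ≠ 0) (f : R⟦X⟧) :
    ∑ s ∈ Finset.range q, PowerSeries.X ^ s * PowerSeries.expand q hq (cartier q s f) = f := by
  refine ext_cartier hq fun r hr => ?_
  rw [map_sum, Finset.sum_congr rfl fun s hs =>
    cartier_X_pow_mul_expand hq hr (Finset.mem_range.1 hs) _, Finset.sum_ite_eq,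
    if_pos (Finset.mem_range.2 hr)]

lemma cartier_expand_mul {q r : ℕ} (hq : q ≠ 0) (hr : r < q) (g h : R⟦X⟧) :
    cartier q r (PowerSeries.expand q hq g * h) = g * cartier q r h := by
  have hterm : ∀ s ∈ Finset.range q,
      cartier q r (PowerSeries.expand q hq g *
          (PowerSeries.X ^ s * PowerSeries.expand q hq (cartier q s h))) =
        if r = s then g * cartier q s h else 0 := fun s hs => by
    rw [mul_left_comm, ← map_mul, cartier_X_pow_mul_expand hq hr (Finset.mem_range.1 hs)]
  conv_lhs => rw [← sum_X_pow_mul_expand_cartier hq h, Finset.mul_sum]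
  rw [map_sum, Finset.sum_congr rfl hterm, Finset.sum_ite_eq, if_pos (Finset.mem_range.2 hr)]

end Expand

section Algebraic

variable {R A : Type*} [CommRing R] [CommRing A] [Algebra R A]

lemma linearIndependent_pow_of_transcendental {f : A} (hf : Transcendental R f) :
    LinearIndependent R fun i : ℕ => f ^ i := by
  have hli := (Polynomial.basisMonomials R).linearIndependent.map' (aeval f).toLinearMap
    (LinearMap.ker_eq_bot.2 (transcendental_iff_injective.1 hf))
  simpa [Function.comp_def] using hli

lemma exists_not_linearIndependent_pow_of_isAlgebraic [IsDomain R] {f : A} (hf : IsAlgebraic R f)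
    (e : ℕ → ℕ) : ∃ n : ℕ, ¬ LinearIndependent R fun i : Fin n => f ^ e i := by
  obtain ⟨c, hc, hint⟩ := hf.exists_integral_multiple
  let B := Algebra.adjoin R {c • f}
  have : Module.Finite R B := Module.Finite.iff_fg.2 hint.fg_adjoin_singleton
  refine ⟨Module.finrank R B + 1, fun hli => ?_⟩
  let y : B := ⟨c • f, Algebra.self_mem_adjoin_singleton R _⟩
  have hy : LinearIndependent R fun i : Fin (Module.finrank R B + 1) => y ^ e i := by
    refine LinearIndependent.of_comp B.val.toLinearMap ?_
    rw [Fintype.linearIndependent_iff] at hli ⊢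
    intro g hg i
    have hgc := hli (fun i => g i * c ^ e i) (by simpa [y, _root_.smul_pow, mul_smul] using hg) i
    exact (mul_eq_zero.1 hgc).resolve_right (pow_ne_zero _ hc)
  simpa using hy.fintype_card_le_finrank

lemma isAlgebraic_of_subset_span_pow [Nontrivial R] (p n : ℕ) [ExpChar R p] [ExpChar A p]
    (hn : 1 < p ^ n) {K : Set A} (hfin : K.Finite)
    (hK : K ⊆ span R ((· ^ p ^ n) '' K)) {f : A} (hf : f ∈ K) : IsAlgebraic R f := by
  let powSpan (j : ℕ) : Submodule R A := span R ((· ^ p ^ (n * j)) '' K)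
  have hmono : Monotone powSpan := by
    refine monotone_nat_of_le_succ fun j => span_le.2 ?_
    rintro _ ⟨g, hg, rfl⟩
    have hmem := image_span_subset_span (LinearMap.iterateFrobenius R A p (n * j)) _
      (Set.mem_image_of_mem _ (hK hg))
    rw [Set.image_image] at hmem
    simpa only [powSpan, LinearMap.iterateFrobenius_def, ← pow_mul, ← pow_add, mul_add_one,
      add_comm n] using hmem
  by_contra htrans
  have hli : LinearIndependent R fun i : Fin (K.ncard + 1) => f ^ p ^ (n * i) :=
    (linearIndependent_pow_of_transcendental htrans).comp (fun i : Fin _ => p ^ (n * i)) <| by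
      simpa only [pow_mul] using! (Nat.pow_right_injective hn).comp Fin.val_injective
  have := (hfin.image (· ^ p ^ (n * K.ncard))).fintype
  have hcard := linearIndependent_le_span_aux' _ hli ((· ^ p ^ (n * K.ncard)) '' K) <| by
    rintro _ ⟨i, rfl⟩
    exact hmono (Nat.lt_succ_iff.1 i.2) (subset_span ⟨f, hf, rfl⟩)
  rw [Fintype.card_fin, ← Nat.card_eq_fintype_card, Nat.card_coe_set_eq] at hcard
  have := Set.ncard_image_le (f := (· ^ p ^ (n * K.ncard))) hfin
  omega

end Algebraic

section BoundedSpan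

variable {R M ι : Type*} [CommRing R] [AddCommGroup M] [Module R M] [Module R[X] M]
  [IsScalarTower R R[X] M] [Fintype ι]

/-- The combinations of `w` with polynomial coefficients of degree at most `N`: a part of the
`R[X]`-span of `w` which is finite when `R` is. -/
noncomputable def boundedSpan (N : ℕ) (w : ι → M) : Submodule R M :=
  (Submodule.pi Set.univ fun _ => degreeLE R N).map
    ((Fintype.linearCombination R[X] w).restrictScalars R)

lemma mem_boundedSpan {N : ℕ} {w : ι → M} {h : M} :
    h ∈ boundedSpan (R := R) N w ↔
      ∃ c : ι → R[X], (∀ i, (c i).natDegree ≤ N) ∧ ∑ i, c i • w i = h := by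
  simp [boundedSpan, Submodule.mem_map, Submodule.mem_pi, mem_degreeLE,
    natDegree_le_iff_degree_le, Fintype.linearCombination_apply]

lemma boundedSpan_mono (w : ι → M) : Monotone fun N => boundedSpan (R := R) N w := by
  intro N N' hN h hh
  obtain ⟨c, hc, rfl⟩ := mem_boundedSpan.1 hh
  exact mem_boundedSpan.2 ⟨c, fun i => (hc i).trans hN, rfl⟩

lemma smul_mem_boundedSpan {d N : ℕ} {w : ι → M} {c : R[X]} {h : M} (hc : c.natDegree ≤ d)
    (hh : h ∈ boundedSpan (R := R) N w) : c • h ∈ boundedSpan (R := R) (d + N) w := by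
  obtain ⟨b, hb, rfl⟩ := mem_boundedSpan.1 hh
  refine mem_boundedSpan.2 ⟨fun i => c * b i, fun i => natDegree_mul_le_of_le hc (hb i), ?_⟩
  simp_rw [Finset.smul_sum, mul_smul]

lemma exists_mem_boundedSpan {w : ι → M} {h : M} (hh : h ∈ span R[X] (Set.range w)) :
    ∃ N, h ∈ boundedSpan (R := R) N w := by
  obtain ⟨c, rfl⟩ := (mem_span_range_iff_exists_fun R[X]).1 hh
  exact ⟨Finset.univ.sup fun i => (c i).natDegree, mem_boundedSpan.2 ⟨c, fun i =>
    Finset.le_sup (f := fun i => (c i).natDegree) (Finset.mem_univ i), rfl⟩⟩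

lemma finite_boundedSpan [Finite R] (N : ℕ) (w : ι → M) :
    (boundedSpan (R := R) N w : Set M).Finite := by
  have hdeg : Finite (degreeLE R N) := by
    rw [← degreeLT_succ_eq_degreeLE]
    exact Finite.of_equiv _ (degreeLTEquiv R (N + 1)).symm.toEquiv
  exact (Set.Finite.pi fun _ => Set.toFinite (degreeLE R N : Set R[X])).image _

end BoundedSpan

section PowerSeries

variable {R : Type*} [CommRing R]

lemma polynomial_smul_eq_coe_mul (c : R[X]) (f : R⟦X⟧) : c • f = (c : R⟦X⟧) * f := by
  simp [Algebra.smul_def, PowerSeries.algebraMap_apply']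

lemma exists_eval₂_eq_zero_iff_isAlgebraic (f : R⟦X⟧) :
    (∃ G : R[X][X], G ≠ 0 ∧ eval₂ coeToPowerSeries.ringHom f G = 0) ↔ IsAlgebraic R[X] f := by
  have hmap : algebraMap R[X] R⟦X⟧ = coeToPowerSeries.ringHom := by
    ext <;> simp [PowerSeries.algebraMap_apply']
  simp only [IsAlgebraic, aeval_def, hmap]

end PowerSeries

section FiniteField

variable {F : Type*} [Field F] [Fintype F]

local notation "q" => Fintype.card F

lemma powerSeries_expand_card (f : F⟦X⟧) :
    PowerSeries.expand q Fintype.card_ne_zero f = f ^ q := by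
  obtain ⟨p, _, n, hp, hcard⟩ := FiniteField.card' F
  have : Fact p.Prime := ⟨hp⟩
  have hfrob : iterateFrobenius F p n = RingHom.id F := by
    rw [iterateFrobenius_eq_pow, FiniteField.frobenius_pow hcard, RingHom.one_def]
  have hexpand := MvPowerSeries.map_iterateFrobenius_expand p hp.ne_zero f n
  rw [hfrob, MvPowerSeries.map_id] at hexpand
  simp only [hcard]
  exact hexpand

lemma cartier_pow_card_smul {r : ℕ} (hr : r < q) (c : F[X]) (h : F⟦X⟧) :
    cartier q r (c ^ q • h) = c • cartier q r h := by
  rw [polynomial_smul_eq_coe_mul, polynomial_smul_eq_coe_mul, Polynomial.coe_pow,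
    ← powerSeries_expand_card, cartier_expand_mul _ hr]

lemma cartier_smul_pow_card {r : ℕ} (hr : r < q) (c : F[X]) (g : F⟦X⟧) :
    cartier q r (c • g ^ q) = polyCartier q r c • g := by
  rw [polynomial_smul_eq_coe_mul, polynomial_smul_eq_coe_mul, mul_comm,
    ← powerSeries_expand_card, cartier_expand_mul _ hr, coe_polyCartier Fintype.card_ne_zero,
    mul_comm]

lemma mem_span_pow_card {K : Set F⟦X⟧} {f : F⟦X⟧} (hf : ∀ r < q, cartier q r f ∈ K) :
    f ∈ span F[X] ((· ^ q) '' K) := by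
  rw [← sum_X_pow_mul_expand_cartier (Fintype.card_ne_zero (α := F)) f]
  refine sum_mem fun r hr => ?_
  rw [powerSeries_expand_card, ← Polynomial.coe_X, ← Polynomial.coe_pow,
    ← polynomial_smul_eq_coe_mul]
  exact smul_mem _ _ (subset_span ⟨_, hf r (Finset.mem_range.1 hr), rfl⟩)

lemma isAlgebraic_of_cartier_mem {K : Set F⟦X⟧} (hfin : K.Finite)
    (hK : ∀ g ∈ K, ∀ r < q, cartier q r g ∈ K) {f : F⟦X⟧} (hf : f ∈ K) : IsAlgebraic F[X] f := by
  obtain ⟨p, _, n, hp, hcard⟩ := FiniteField.card' F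
  have : Fact p.Prime := ⟨hp⟩
  have : CharP F⟦X⟧ p := charP_of_injective_algebraMap (algebraMap F F⟦X⟧).injective p
  have hspan : K ⊆ span F[X] ((· ^ p ^ (n : ℕ)) '' K) := fun g hg => by
    simpa only [hcard, SetLike.mem_coe] using mem_span_pow_card (hK g hg)
  exact isAlgebraic_of_subset_span_pow p n (hcard ▸ Fintype.one_lt_card) hfin hspan hf

lemma linearIndependent_pow_card {ι : Type*} {v : ι → F⟦X⟧} (hv : LinearIndependent F[X] v) :
    LinearIndependent F[X] fun i => v i ^ q := by
  rw [linearIndependent_iff'] at hv ⊢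
  intro s c hc i hi
  refine eq_zero_of_polyCartier_eq_zero (Fintype.card_ne_zero (α := F)) fun r hr => ?_
  refine hv s (fun j => polyCartier q r (c j)) ?_ i hi
  simpa only [map_sum, cartier_smul_pow_card hr, map_zero] using congrArg (cartier q r) hc

lemma exists_smul_mem_span_pow_card_pow {f : F⟦X⟧} (hf : IsAlgebraic F[X] f) :
    ∃ (n : ℕ) (a : F[X]), a ≠ 0 ∧
      a • f ∈ span F[X] (Set.range fun i : Fin n => f ^ q ^ ((i : ℕ) + 1)) := by
  by_contra! hnot
  obtain ⟨n, hn⟩ := exists_not_linearIndependent_pow_of_isAlgebraic hf (q ^ ·)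
  refine hn (Nat.rec linearIndependent_empty_type (fun n ih => ?_) n)
  have hpow : LinearIndependent F[X] fun i : Fin n => f ^ q ^ ((i : ℕ) + 1) := by
    simpa only [pow_succ, pow_mul] using linearIndependent_pow_card ih
  have hcons : (fun i : Fin (n + 1) => f ^ q ^ (i : ℕ)) =
      Fin.cons f fun i : Fin n => f ^ q ^ ((i : ℕ) + 1) := by
    funext i
    refine Fin.cases ?_ (fun i => ?_) i <;> simp
  rw [hcons]
  refine LinearIndependent.finCons' f _ hpow fun a y hy hay => ?_
  by_contra ha
  refine hnot n a ha ?_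
  rw [eq_neg_of_add_eq_zero_left hay]
  exact neg_mem hy

lemma cartier_mem_boundedSpan {ι : Type*} [Fintype ι] {v : ι → F⟦X⟧} {N r : ℕ} (hr : r < q)
    {h : F⟦X⟧} (hh : h ∈ boundedSpan (R := F) (q * N) fun i => v i ^ q) :
    cartier q r h ∈ boundedSpan (R := F) N v := by
  obtain ⟨c, hc, rfl⟩ := mem_boundedSpan.1 hh
  refine mem_boundedSpan.2 ⟨fun i => polyCartier q r (c i), fun i =>
    natDegree_polyCartier_le Fintype.card_ne_zero r (hc i), ?_⟩
  simp only [map_sum, cartier_smul_pow_card hr]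

lemma exists_finite_cartier_mem {ι : Type*} [Finite ι] {v : ι → F⟦X⟧} {a : F[X]} (ha : a ≠ 0)
    (hav : ∀ i, a • v i ∈ span F[X] (Set.range fun j => v j ^ q)) :
    ∃ H : Set F⟦X⟧, H.Finite ∧ (∀ i, v i ∈ H) ∧ ∀ h ∈ H, ∀ r < q, cartier q r h ∈ H := by
  cases nonempty_fintype ι
  choose N₀ hN₀ using fun i => exists_mem_boundedSpan (R := F) (hav i)
  obtain ⟨t, ht⟩ : ∃ t, q = t + 2 := Nat.exists_eq_add_of_le' (Fintype.one_lt_card (α := F))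
  let N := a.natDegree ⊔ Finset.univ.sup N₀
  let B := boundedSpan (R := F) (q * N) fun i => v i ^ q
  have haN : a.natDegree ≤ N := le_sup_left
  have hB (c : F[X]) (hc : c.natDegree ≤ N) (i : ι) : (a ^ t * c) • a • v i ∈ B := by
    have hdeg : (a ^ t * c).natDegree ≤ t * N + N :=
      natDegree_mul_le_of_le (natDegree_pow_le_of_le t haN) hc
    have hmem : a • v i ∈ boundedSpan (R := F) N fun i => v i ^ q :=
      boundedSpan_mono _ ((Finset.le_sup (Finset.mem_univ i)).trans le_sup_right) (hN₀ i)
    have hq : q * N = t * N + N + N := by rw [ht]; ring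
    simpa only [B, hq] using smul_mem_boundedSpan hdeg hmem
  refine ⟨{h | a ^ q • h ∈ B}, ?_, fun i => ?_, fun h hh r hr => ?_⟩
  · have hcoe : ((a ^ q : F[X]) : F⟦X⟧) ≠ 0 := by simpa using ha
    have hinj : Function.Injective fun h : F⟦X⟧ => a ^ q • h := by
      simpa only [polynomial_smul_eq_coe_mul] using mul_right_injective₀ hcoe
    exact (finite_boundedSpan _ _).preimage hinj.injOn
  · have hsplit : a ^ q • v i = (a ^ t * a) • a • v i := by
      rw [smul_smul, ht]
      ring_nf
    rw [Set.mem_ofPred_eq, hsplit]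
    exact hB a haN i
  · obtain ⟨c, hc, hsum⟩ := mem_boundedSpan.1 (cartier_mem_boundedSpan hr hh)
    rw [cartier_pow_card_smul hr] at hsum
    have hsplit : a ^ q • cartier q r h = ∑ i, (a ^ t * c i) • a • v i := by
      calc a ^ q • cartier q r h = (a ^ t * a) • a • cartier q r h := by
            rw [smul_smul, ht]
            ring_nf
        _ = ∑ i, (a ^ t * c i) • a • v i := by
            rw [← hsum, Finset.smul_sum]
            refine Finset.sum_congr rfl fun i _ => ?_
            rw [smul_smul, smul_smul, mul_right_comm]
    rw [Set.mem_ofPred_eq, hsplit]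
    exact sum_mem fun i _ => hB (c i) (hc i) i

lemma exists_finite_cartier_mem_of_isAlgebraic {f : F⟦X⟧} (hf : IsAlgebraic F[X] f) :
    ∃ H : Set F⟦X⟧, H.Finite ∧ f ∈ H ∧ ∀ h ∈ H, ∀ r < q, cartier q r h ∈ H := by
  obtain ⟨n, a, ha, haf⟩ := exists_smul_mem_span_pow_card_pow hf
  let v (i : Fin (n + 1)) : F⟦X⟧ := f ^ q ^ (i : ℕ)
  have hv (i : Fin (n + 1)) : v i ^ q = f ^ q ^ ((i : ℕ) + 1) := by
    rw [← pow_mul, ← pow_succ]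
  have hav (i : Fin (n + 1)) : a • v i ∈ span F[X] (Set.range fun j => v j ^ q) := by
    refine Fin.cases ?_ (fun i => ?_) i
    · refine span_mono ?_ (by simpa [v] using haf)
      rintro _ ⟨j, rfl⟩
      exact ⟨j.castSucc, hv _⟩
    · exact smul_mem _ _ (subset_span ⟨i.castSucc, (hv _).trans (by simp [v])⟩)
  obtain ⟨H, hfin, hvH, hH⟩ := exists_finite_cartier_mem ha hav
  exact ⟨H, hfin, by simpa [v] using hvH 0, hH⟩

theorem isAlgebraic_mk_iff_finite_kernel_card (u : ℕ → F) :
    IsAlgebraic F[X] (PowerSeries.mk u) ↔ (kernel q u).Finite := by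
  constructor
  · intro hu
    obtain ⟨H, hfin, huH, hH⟩ := exists_finite_cartier_mem_of_isAlgebraic hu
    have hinj : Function.Injective (PowerSeries.mk : (ℕ → F) → F⟦X⟧) := fun v w hvw => by
      simpa [PowerSeries.ext_iff, funext_iff] using hvw
    refine (hfin.preimage hinj.injOn).subset (kernel_subset_of_decimate_mem huH fun v hv r hr => ?_)
    rw [Set.mem_preimage, ← cartier_mk]
    exact hH _ hv r hr
  · intro hu
    refine isAlgebraic_of_cartier_mem (hu.image PowerSeries.mk) ?_
      (Set.mem_image_of_mem _ (self_mem_kernel q u))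
    rintro _ ⟨v, hv, rfl⟩ r hr
    exact ⟨decimate q r v, decimate_mem_kernel hv hr, (cartier_mk q r v).symm⟩

end FiniteField

end Christol

/-- **Christol's theorem** (Theorem 4 of the paper).
A power series `f = ∑ u_n Xⁿ` over a finite field `𝔽_q` of characteristic `p`
is algebraic over `𝔽_q(X)` if and only if the `p`-kernel
`{ n ↦ u(n·p^k + r) : k ∈ ℕ, 0 ≤ r < p^k }` of the coefficient sequence `u`
is finite. -/
theorem christol
    (F : Type*) [Field F] [Fintype F] (p : ℕ) [Fact p.Prime] [CharP F p]
    (u : ℕ → F) :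
    (∃ G : Polynomial (Polynomial F), G ≠ 0 ∧
        Polynomial.eval₂ Polynomial.coeToPowerSeries.ringHom
          (PowerSeries.mk u) G = 0) ↔
      {v : ℕ → F | ∃ k r : ℕ, r < p ^ k ∧ v = fun n => u (n * p ^ k + r)}.Finite := by
  obtain ⟨s, hp, hcard⟩ := FiniteField.card F p
  calc _ ↔ IsAlgebraic F[X] (PowerSeries.mk u) :=
        Christol.exists_eval₂_eq_zero_iff_isAlgebraic _
    _ ↔ (Christol.kernel (Fintype.card F) u).Finite :=
        Christol.isAlgebraic_mk_iff_finite_kernel_card u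
    _ ↔ (Christol.kernel p u).Finite := by
        rw [hcard, Christol.finite_kernel_pow_iff hp.pos s.pos]
end

section
/- Let 𝔽_q be a finite field of characteristic p. If the formal power series f = Σ_{n≥0} u_n Xⁿ ∈ 𝔽_q[[X]] is algebraic over the rational function field 𝔽_q(X) (i.e., some nonzero polynomial in Y with coefficients in 𝔽_q[X] vanishes at f), then the p-kernel of the sequence u, namely the set of sequences { n ↦ u(n·p^k + r) : k ∈ ℕ, 0 ≤ r < p^k }, is finite. -/
/-!
Write `q` for the cardinality of `F` and `Λ_r` for the operator `∑ a_n Xⁿ ↦ ∑ a_{nq+r} Xⁿ`, which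
satisfies `Λ_r (f g^q) = Λ_r(f) g`. Applying all the `Λ_r` to a relation `∑ c_i v_i^q = 0` gives
`∑ Λ_r(c_i) v_i = 0`, so `q`-th powers preserve linear independence over `F[X]`. If `f` is
algebraic, a multiple `a f` generates an algebra of finite rank over `F[X]`. The `q`-th powers of a
basis `v` are again independent, hence span that algebra up to a denominator, and there is `b ≠ 0`
such that `b f` is a combination of the `v_j` and `b^(q-1) v_j` one of the `v_i^q`.

Consider the power series `h` such that `b h` is a combination of the `v_j` with coefficients of
degree at most `N`. There are finitely many, and `b Λ_r(h) = Λ_r(b^(q-1) (b h))` is the image under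
`Λ_r` of a combination of the `v_i^q` with coefficients of degree at most `2N` for large `N`. As
`Λ_r` divides degrees by `q ≥ 2`, the set is stable under `Λ_r`; it contains `f`, so the `q`-kernel
is finite. Finally `q` is a power of `p`, and each element of the `p`-kernel arises from one of the
`q`-kernel in one of finitely many ways.
-/

open Polynomial PowerSeries

section Sequences

variable {α : Type*}

/-- The subsequence of `u` along the arithmetic progression `r, m + r, 2m + r, …`. -/
def decimate (m r : ℕ) (u : ℕ → α) : ℕ → α := fun n => u (n * m + r)

/-- The `m`-kernel of `u`, in the sense of automatic sequences. -/
def seqKernel (m : ℕ) (u : ℕ → α) : Set (ℕ → α) :=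
  {v | ∃ k r : ℕ, r < m ^ k ∧ v = decimate (m ^ k) r u}

theorem decimate_decimate (a b s t : ℕ) (u : ℕ → α) :
    decimate a s (decimate b t u) = decimate (a * b) (s * b + t) u := by
  funext n
  simp only [decimate]
  congr 1
  ring

theorem decimate_mul (a b r : ℕ) (u : ℕ → α) :
    decimate (a * b) r u = decimate a (r / b) (decimate b (r % b) u) := by
  rw [decimate_decimate, Nat.div_add_mod']

theorem seqKernel_subset {m : ℕ} {u : ℕ → α} {S : Set (ℕ → α)} (hu : u ∈ S)
    (hS : ∀ v ∈ S, ∀ r < m, decimate m r v ∈ S) : seqKernel m u ⊆ S := by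
  rintro _ ⟨k, r, hr, rfl⟩
  induction k generalizing r with
  | zero =>
    obtain rfl : r = 0 := by simpa using hr
    have : decimate 1 0 u = u := by funext n; simp [decimate]
    simpa [this] using hu
  | succ k ih =>
    rw [pow_succ'] at hr ⊢
    rw [decimate_mul]
    exact hS _ (ih _ (Nat.mod_lt _ (Nat.pos_of_lt_mul_left hr))) _
      (Nat.div_lt_of_lt_mul (by rwa [mul_comm]))

theorem seqKernel_finite_of_pow {m s : ℕ} (hs : s ≠ 0) {u : ℕ → α}
    (h : (seqKernel (m ^ s) u).Finite) : (seqKernel m u).Finite := by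
  have hfin : (⋃ t ∈ Set.Iio s, ⋃ r ∈ Set.Iio (m ^ t),
      decimate (m ^ t) r '' seqKernel (m ^ s) u).Finite :=
    (Set.finite_Iio s).biUnion fun t _ => (Set.finite_Iio (m ^ t)).biUnion fun r _ => h.image _
  refine hfin.subset ?_
  rintro _ ⟨k, r, hr, rfl⟩
  have hk : m ^ k = m ^ (k % s) * (m ^ s) ^ (k / s) := by
    rw [← pow_mul, ← pow_add, Nat.mod_add_div]
  rw [hk] at hr ⊢
  rw [decimate_mul]
  simp only [Set.mem_iUnion]
  exact ⟨k % s, Nat.mod_lt _ (Nat.pos_of_ne_zero hs), r / (m ^ s) ^ (k / s),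
    Nat.div_lt_of_lt_mul (by rwa [mul_comm]), Set.mem_image_of_mem _
      ⟨k / s, _, Nat.mod_lt _ (Nat.pos_of_lt_mul_left hr), rfl⟩⟩

end Sequences

section Sections

variable {R : Type*} [CommRing R]

/-- The section operator `∑ a_n Xⁿ ↦ ∑ a_{nq+r} Xⁿ` on power series, also known as a Cartier
operator. Over a finite field with `q` elements no root has to be taken of the coefficients. -/
noncomputable def seriesSection (q r : ℕ) : R⟦X⟧ →ₗ[R] R⟦X⟧ where
  toFun f := .mk (decimate q r fun n => coeff n f)
  map_add' f g := by ext; simp [decimate]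
  map_smul' a f := by ext; simp [decimate]

theorem coeff_seriesSection (q r n : ℕ) (f : R⟦X⟧) :
    coeff n (seriesSection q r f) = coeff (n * q + r) f := by
  simp [seriesSection, decimate]

theorem seriesSection_mk (q r : ℕ) (u : ℕ → R) :
    seriesSection q r (.mk u) = .mk (decimate q r u) := by
  simp [seriesSection]

theorem eq_zero_of_forall_seriesSection_eq_zero {q : ℕ} (hq : q ≠ 0) {f : R⟦X⟧}
    (hf : ∀ r < q, seriesSection q r f = 0) : f = 0 := by
  ext n
  rw [← Nat.div_add_mod' n q, ← coeff_seriesSection, hf _ (Nat.mod_lt _ (Nat.pos_of_ne_zero hq))]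
  simp

theorem seriesSection_mul_expand {q r : ℕ} (hr : r < q) (hq : q ≠ 0) (f g : R⟦X⟧) :
    seriesSection q r (f * expand q hq g) = seriesSection q r f * g := by
  ext n
  rw [coeff_seriesSection, PowerSeries.coeff_mul, PowerSeries.coeff_mul]
  symm
  refine Finset.sum_of_injOn (fun x => (x.1 * q + r, q * x.2)) ?_ ?_ ?_ ?_
  · rintro ⟨a, b⟩ - ⟨c, d⟩ - h
    simpa [hq] using h
  · rintro ⟨a, b⟩ h
    obtain rfl : a + b = n := by simpa using h
    rw [Finset.mem_coe, Finset.HasAntidiagonal.mem_antidiagonal]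
    ring
  · rintro ⟨a, b⟩ hab hout
    rw [coeff_expand_of_not_dvd, mul_zero]
    rintro ⟨d, rfl⟩
    have hsum : a + q * d = n * q + r := by simpa using hab
    have hmod : a % q = r := by
      simpa [Nat.mod_eq_of_lt hr] using congrArg (· % q) hsum
    refine hout ⟨(a / q, d), ?_, by simp [← hmod, Nat.div_add_mod']⟩
    have : (a / q + d) * q = n * q := by
      have := Nat.div_add_mod' a q
      rw [hmod] at this
      linarith
    simpa using Nat.eq_of_mul_eq_mul_right (Nat.pos_of_ne_zero hq) this
  · rintro ⟨a, b⟩ -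
    simp only [coeff_seriesSection, PowerSeries.coeff_expand_mul]

/-- The section operator `∑ a_n Xⁿ ↦ ∑ a_{nq+r} Xⁿ` on polynomials. The truncation is harmless
only for `q ≠ 0`. -/
noncomputable def polySection (q r : ℕ) (c : R[X]) : R[X] :=
  trunc (c.natDegree + 1) (seriesSection q r c)

theorem coeff_polySection {q : ℕ} (hq : q ≠ 0) (r n : ℕ) (c : R[X]) :
    (polySection q r c).coeff n = c.coeff (n * q + r) := by
  rw [polySection, coeff_trunc, coeff_seriesSection, Polynomial.coeff_coe, ite_eq_left_iff]
  intro hn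
  refine (coeff_eq_zero_of_natDegree_lt ?_).symm
  have := Nat.le_mul_of_pos_right n (Nat.pos_of_ne_zero hq)
  omega

theorem coe_polySection {q : ℕ} (hq : q ≠ 0) (r : ℕ) (c : R[X]) :
    (polySection q r c : R⟦X⟧) = seriesSection q r c := by
  ext n
  rw [Polynomial.coeff_coe, coeff_polySection hq, coeff_seriesSection, Polynomial.coeff_coe]

theorem natDegree_polySection_le {q : ℕ} (hq : q ≠ 0) (r : ℕ) (c : R[X]) :
    (polySection q r c).natDegree ≤ c.natDegree / q := by
  rw [natDegree_le_iff_coeff_eq_zero]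
  intro n hn
  rw [coeff_polySection hq]
  apply coeff_eq_zero_of_natDegree_lt
  rw [Nat.div_lt_iff_lt_mul (Nat.pos_of_ne_zero hq)] at hn
  omega

theorem seriesSection_smul_expand {q r : ℕ} (hr : r < q) (hq : q ≠ 0) (c : R[X]) (g : R⟦X⟧) :
    seriesSection q r (c • expand q hq g) = polySection q r c • g := by
  change seriesSection q r ((c : R⟦X⟧) * expand q hq g) = (polySection q r c : R⟦X⟧) * g
  rw [seriesSection_mul_expand hr, coe_polySection hq]

theorem linearIndependent_expand {q : ℕ} (hq : q ≠ 0) {ι : Type*} {v : ι → R⟦X⟧}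
    (hv : LinearIndependent R[X] v) : LinearIndependent R[X] fun i => expand q hq (v i) := by
  rw [linearIndependent_iff'] at hv ⊢
  intro s c hc i hi
  have hsection : ∀ r < q, polySection q r (c i) = 0 := fun r hr => by
    refine hv s (fun j => polySection q r (c j)) ?_ i hi
    simpa only [map_sum, map_zero, seriesSection_smul_expand hr hq] using
      congrArg (seriesSection q r) hc
  rw [← Polynomial.coe_eq_zero_iff]
  refine eq_zero_of_forall_seriesSection_eq_zero hq fun r hr => ?_
  rw [← coe_polySection hq, hsection r hr, Polynomial.coe_zero]

instance isTorsionFree_polynomial_powerSeries [IsDomain R] : Module.IsTorsionFree R[X] R⟦X⟧ := by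
  have : FaithfulSMul R[X] R⟦X⟧ :=
    (faithfulSMul_iff_algebraMap_injective _ _).2 (Polynomial.coe_injective R)
  infer_instance

end Sections

theorem exists_ne_zero_smul_mem_span {R M ι : Type*} [CommRing R] [IsDomain R] [AddCommGroup M]
    [Module R M] [Module.Finite R M] [Fintype ι] {w : ι → M} (hw : LinearIndependent R w)
    (hcard : Fintype.card ι = Module.finrank R M) :
    ∃ b : R, b ≠ 0 ∧ ∀ x, b • x ∈ Submodule.span R (Set.range w) := by
  let W := Submodule.span R (Set.range w)
  have htorsion : Module.IsTorsion R (M ⧸ W) := by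
    rw [← Module.finrank_eq_zero_iff_isTorsion, Submodule.finrank_quotient, finrank_span_eq_card hw,
      hcard, Nat.sub_self]
  obtain ⟨b, hb, hb0⟩ := Submodule.annihilator_top_inter_nonZeroDivisors htorsion
  refine ⟨b, nonZeroDivisors.ne_zero hb0, fun x => ?_⟩
  rw [← Submodule.Quotient.mk_eq_zero, Submodule.Quotient.mk_smul]
  exact Submodule.mem_annihilator.mp hb _ Submodule.mem_top

section BoundedCombinations

variable (R : Type*) {M ι κ : Type*} [CommRing R] [AddCommGroup M] [Module R[X] M] [Fintype ι]

/-- The linear combinations of the family `v` with polynomial coefficients of degree at most `N`;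
finite over a finite ring, they confine the sections of an algebraic power series. -/
def boundedCombinations (v : ι → M) (N : ℕ) : Set M :=
  {h | ∃ c : ι → R[X], (∀ i, (c i).natDegree ≤ N) ∧ ∑ i, c i • v i = h}

variable {R}

theorem eventually_mem_boundedCombinations {v : ι → M} {h : M}
    (hh : h ∈ Submodule.span R[X] (Set.range v)) :
    ∀ᶠ N in Filter.atTop, h ∈ boundedCombinations R v N := by
  obtain ⟨c, hc⟩ := (Submodule.mem_span_range_iff_exists_fun _).1 hh
  have hdeg : ∀ᶠ N in Filter.atTop, ∀ i, (c i).natDegree ≤ N :=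
    Filter.eventually_all.2 fun i => Filter.eventually_ge_atTop _
  exact hdeg.mono fun N hN => ⟨c, hN, hc⟩

theorem smul_mem_boundedCombinations [Fintype κ] {v : ι → M} {w : κ → M} {a : R[X]} {h : M}
    {K N : ℕ} (hh : h ∈ boundedCombinations R v K)
    (hv : ∀ i, a • v i ∈ boundedCombinations R w N) :
    a • h ∈ boundedCombinations R w (K + N) := by
  obtain ⟨c, hc, rfl⟩ := hh
  choose d hd hdv using hv
  refine ⟨fun k => ∑ i, c i * d i k, fun k => ?_, ?_⟩
  · exact natDegree_sum_le_of_forall_le _ _ fun i _ => natDegree_mul_le_of_le (hc i) (hd i k)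
  · calc ∑ k, (∑ i, c i * d i k) • w k = ∑ i, c i • ∑ k, d i k • w k := by
          simp only [Finset.sum_smul, Finset.smul_sum, mul_smul]
          exact Finset.sum_comm
      _ = a • ∑ i, c i • v i := by
          simp only [hdv, Finset.smul_sum, smul_comm a]

theorem finite_setOf_natDegree_le (R : Type*) [Semiring R] [Finite R] (N : ℕ) :
    {c : R[X] | c.natDegree ≤ N}.Finite := by
  have : Finite (degreeLT R (N + 1)) := .of_equiv _ (degreeLTEquiv R (N + 1)).symm.toEquiv
  refine (Set.toFinite (degreeLT R (N + 1) : Set R[X])).subset fun c hc => ?_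
  exact mem_degreeLT.2 (degree_le_natDegree.trans_lt (mod_cast Nat.lt_succ_of_le hc))

theorem boundedCombinations_finite [Finite R] (v : ι → M) (N : ℕ) :
    (boundedCombinations R v N).Finite :=
  (Set.Finite.pi' fun _ => finite_setOf_natDegree_le R N).image fun c : ι → R[X] => ∑ i, c i • v i

end BoundedCombinations

section FiniteField

variable {F : Type*} [Field F] [Fintype F]

theorem expand_card_eq_pow (f : F⟦X⟧) :
    expand (Fintype.card F) Fintype.card_ne_zero f = f ^ Fintype.card F := by
  obtain ⟨p, hchar⟩ := CharP.exists F
  obtain ⟨s, hp, hs⟩ := FiniteField.card F p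
  have : Fact p.Prime := ⟨hp⟩
  have hid : iterateFrobenius F p s = RingHom.id F := by
    ext a
    rw [iterateFrobenius_def, ← hs, FiniteField.pow_card, RingHom.id_apply]
  have hmap := MvPowerSeries.map_iterateFrobenius_expand p hp.ne_zero f s
  simp only [hid, MvPowerSeries.map_id, RingHom.id_apply, ← hs] at hmap
  exact hmap

theorem seriesSection_mul_pow_card {r : ℕ} (hr : r < Fintype.card F) (f g : F⟦X⟧) :
    seriesSection (Fintype.card F) r (f * g ^ Fintype.card F) =
      seriesSection (Fintype.card F) r f * g := by
  rw [← expand_card_eq_pow, seriesSection_mul_expand hr]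

theorem seriesSection_smul_pow_card {r : ℕ} (hr : r < Fintype.card F) (c : F[X]) (g : F⟦X⟧) :
    seriesSection (Fintype.card F) r (c • g ^ Fintype.card F) =
      polySection (Fintype.card F) r c • g := by
  rw [← expand_card_eq_pow, seriesSection_smul_expand hr]

theorem seriesSection_pow_card_smul {r : ℕ} (hr : r < Fintype.card F) (b : F[X]) (f : F⟦X⟧) :
    seriesSection (Fintype.card F) r (b ^ Fintype.card F • f) =
      b • seriesSection (Fintype.card F) r f := by
  simp only [Algebra.smul_def, map_pow]
  rw [mul_comm, seriesSection_mul_pow_card hr, mul_comm]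

theorem linearIndependent_pow_card {ι : Type*} {v : ι → F⟦X⟧} (hv : LinearIndependent F[X] v) :
    LinearIndependent F[X] fun i => v i ^ Fintype.card F := by
  have hpow : (fun i => v i ^ Fintype.card F) = fun i => expand _ Fintype.card_ne_zero (v i) :=
    funext fun i => (expand_card_eq_pow (v i)).symm
  rw [hpow]
  exact linearIndependent_expand _ hv

variable {ι : Type*} [Fintype ι] {v : ι → F⟦X⟧} {N r : ℕ} {h : F⟦X⟧}

theorem seriesSection_mem_boundedCombinations (hr : r < Fintype.card F)
    (hh : h ∈ boundedCombinations F (fun i => v i ^ Fintype.card F) (N + N)) :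
    seriesSection (Fintype.card F) r h ∈ boundedCombinations F v N := by
  obtain ⟨c, hc, rfl⟩ := hh
  refine ⟨fun i => polySection (Fintype.card F) r (c i), fun i => ?_, ?_⟩
  · calc (polySection (Fintype.card F) r (c i)).natDegree
        ≤ (c i).natDegree / Fintype.card F := natDegree_polySection_le Fintype.card_ne_zero r _
      _ ≤ (N + N) / 2 := Nat.div_le_div (hc i) Fintype.one_lt_card two_ne_zero
      _ = N := by omega
  · simp only [map_sum, seriesSection_smul_pow_card hr]

theorem smul_seriesSection_mem_boundedCombinations {b : F[X]}
    (hv : ∀ j, b ^ (Fintype.card F - 1) • v j ∈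
      boundedCombinations F (fun i => v i ^ Fintype.card F) N)
    (hr : r < Fintype.card F) (hh : b • h ∈ boundedCombinations F v N) :
    b • seriesSection (Fintype.card F) r h ∈ boundedCombinations F v N := by
  rw [← seriesSection_pow_card_smul hr, ← pow_sub_one_mul Fintype.card_ne_zero, mul_smul]
  exact seriesSection_mem_boundedCombinations hr (smul_mem_boundedCombinations hh hv)

theorem exists_family_smul_mem_span_pow_card {f : F⟦X⟧} (hf : IsAlgebraic F[X] f) :
    ∃ (n : ℕ) (v : Fin n → F⟦X⟧) (b : F[X]), b ≠ 0 ∧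
      b • f ∈ Submodule.span F[X] (Set.range v) ∧
      ∀ j, b • v j ∈ Submodule.span F[X] (Set.range fun i => v i ^ Fintype.card F) := by
  obtain ⟨a, ha, hint⟩ := hf.exists_integral_multiple
  let A := Algebra.adjoin F[X] {a • f}
  have : Module.Finite F[X] A := Module.Finite.iff_fg.2 hint.fg_adjoin_singleton
  let v := Module.finBasis F[X] A
  have hspan {n : ℕ} (w : Fin n → A) {x : A} (hx : x ∈ Submodule.span F[X] (Set.range w)) :
      (x : F⟦X⟧) ∈ Submodule.span F[X] (Set.range fun i => (w i : F⟦X⟧)) := by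
    have := Submodule.mem_map_of_mem (f := A.val.toLinearMap) hx
    rwa [Submodule.map_span, ← Set.range_comp] at this
  have hv : LinearIndependent F[X] fun i => (v i : F⟦X⟧) :=
    v.linearIndependent.map' A.val.toLinearMap (LinearMap.ker_eq_bot.2 Subtype.val_injective)
  have hpow : LinearIndependent F[X] fun i => v i ^ Fintype.card F :=
    .of_comp A.val.toLinearMap (linearIndependent_pow_card hv)
  obtain ⟨b, hb, hbspan⟩ := exists_ne_zero_smul_mem_span hpow (Fintype.card_fin _)
  refine ⟨_, fun i => v i, a * b, mul_ne_zero ha hb, ?_, fun j => ?_⟩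
  · rw [mul_comm, mul_smul]
    exact Submodule.smul_mem _ b
      (hspan v (v.mem_span ⟨a • f, Algebra.self_mem_adjoin_singleton _ _⟩))
  · rw [mul_smul]
    refine Submodule.smul_mem _ a ?_
    simpa only [SubmonoidClass.coe_pow, SetLike.val_smul] using hspan _ (hbspan (v j))

theorem seqKernel_card_finite {u : ℕ → F} (hu : IsAlgebraic F[X] (PowerSeries.mk u)) :
    (seqKernel (Fintype.card F) u).Finite := by
  obtain ⟨n, v, b, hb, hf, hv⟩ := exists_family_smul_mem_span_pow_card hu
  have hv' : ∀ j, b ^ (Fintype.card F - 1) • v j ∈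
      Submodule.span F[X] (Set.range fun i => v i ^ Fintype.card F) := fun j => by
    rw [← pow_sub_one_mul (Nat.sub_ne_zero_of_lt Fintype.one_lt_card), mul_smul]
    exact Submodule.smul_mem _ _ (hv j)
  obtain ⟨N, hfN, hvN⟩ := ((eventually_mem_boundedCombinations hf).and
    (Filter.eventually_all.2 fun j => eventually_mem_boundedCombinations (hv' j))).exists
  have hinj : Function.Injective fun w : ℕ → F => b • PowerSeries.mk w :=
    (smul_right_injective _ hb).comp fun w w' h =>
      funext fun n => by simpa using congrArg (PowerSeries.coeff n) h
  refine ((boundedCombinations_finite v N).preimage hinj.injOn).subset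
    (seqKernel_subset hfN fun w hw r hr => ?_)
  simpa only [Set.mem_preimage, seriesSection_mk] using
    smul_seriesSection_mem_boundedCombinations hvN hr hw

end FiniteField

/-- **One direction of Christol's theorem** (Corollary 1 of the paper).
If the power series `f = ∑ u_n Xⁿ` over a finite field `𝔽_q` of
characteristic `p` is algebraic over `𝔽_q(X)`, then the `p`-kernel
`{ n ↦ u(n·p^k + r) : k ∈ ℕ, 0 ≤ r < p^k }` of `u` is finite. -/
theorem kernel_finite_of_algebraic
    (F : Type*) [Field F] [Fintype F] (p : ℕ) [Fact p.Prime] [CharP F p]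
    (u : ℕ → F)
    (halg : ∃ G : Polynomial (Polynomial F), G ≠ 0 ∧
      Polynomial.eval₂ Polynomial.coeToPowerSeries.ringHom
        (PowerSeries.mk u) G = 0) :
    {v : ℕ → F | ∃ k r : ℕ, r < p ^ k ∧ v = fun n => u (n * p ^ k + r)}.Finite := by
  obtain ⟨s, -, hs⟩ := FiniteField.card F p
  have hu : IsAlgebraic F[X] (PowerSeries.mk u) := halg
  exact seqKernel_finite_of_pow s.ne_zero (hs ▸ seqKernel_card_finite hu)
end
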